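/- Let λ1>0, λ2≥0, λ3≥0 and let f be the joint mass function of the bivariate Pseudo-Poisson distribution. Then the covariance of the two coordinates satisfies ∑_{x1=0}^∞ ∑_{x2=0}^∞ x1·x2 · f(x1,x2) − (∑_{x1,x2} x1 · f(x1,x2)) · (∑_{x1,x2} x2 · f(x1,x2)) = λ1·λ3. -/

import Mathlib

/-!
Conditionally on `X1 = x1` the second coordinate is Poisson of rate `l2 + l3 * x1`, so each inner
sum over `x2` is evaluated by the total mass or the mean of a Poisson law. What remains are the
first two moments of the Poisson law of rate `l1`, namely `l1` and `l1 * (l1 + 1)`, giving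
`E[X1 X2] = l2 * l1 + l3 * l1 * (l1 + 1)`, `E[X1] = l1` and `E[X2] = l2 + l3 * l1`.
The moments come from the shift identity `hasSum_poissonWeight_shift`.
-/

/-- The joint mass function of the bivariate Pseudo-Poisson distribution
with parameters `λ1, λ2, λ3` (with linear regression). -/
noncomputable def pseudoPoissonPMF (l1 l2 l3 : ℝ) (x1 x2 : ℕ) : ℝ :=
  (Real.exp (-l1) * l1 ^ x1 / (Nat.factorial x1)) *
    (Real.exp (-(l2 + l3 * x1)) * (l2 + l3 * x1) ^ x2 / (Nat.factorial x2))

/-- The Poisson weight `e^{-m} m^n / n!`, for an arbitrary real rate `m`. -/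
noncomputable def poissonWeight (m : ℝ) (n : ℕ) : ℝ :=
  Real.exp (-m) * m ^ n / (Nat.factorial n)

lemma hasSum_poissonWeight (m : ℝ) : HasSum (poissonWeight m) 1 := by
  have h := (NormedSpace.expSeries_div_hasSum_exp (𝔸 := ℝ) m).mul_left (Real.exp (-m))
  rw [← Real.exp_eq_exp_ℝ, ← Real.exp_add, neg_add_cancel, Real.exp_zero] at h
  exact h.congr_fun fun n => by rw [poissonWeight, mul_div_assoc]

/-- The Stein–Chen identity `E[N a(N)] = m E[a(N + 1)]` for a Poisson variable `N` of rate `m`;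
all moments follow from it by iteration. -/
lemma hasSum_poissonWeight_shift {m s : ℝ} {a : ℕ → ℝ}
    (h : HasSum (fun n => a (n + 1) * poissonWeight m n) s) :
    HasSum (fun n : ℕ => (n : ℝ) * a n * poissonWeight m n) (m * s) := by
  rw [← hasSum_nat_add_iff' 1]
  simp only [Finset.range_one, Finset.sum_singleton, Nat.cast_zero, zero_mul, sub_zero]
  refine (h.mul_left m).congr_fun fun n => ?_
  have hn : ((n : ℝ) + 1) ≠ 0 := by positivity
  simp only [poissonWeight, Nat.factorial_succ, Nat.cast_mul, Nat.cast_add, Nat.cast_one,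
    pow_succ]
  field_simp

lemma hasSum_poissonWeight_mean (m : ℝ) :
    HasSum (fun n : ℕ => (n : ℝ) * poissonWeight m n) m := by
  simpa using hasSum_poissonWeight_shift (m := m) (s := 1) (a := fun _ => 1)
    (by simpa using hasSum_poissonWeight m)

lemma hasSum_poissonWeight_sq (m : ℝ) :
    HasSum (fun n : ℕ => (n : ℝ) * n * poissonWeight m n) (m * (m + 1)) := by
  refine hasSum_poissonWeight_shift (a := fun n => (n : ℝ)) ?_
  refine ((hasSum_poissonWeight_mean m).add (hasSum_poissonWeight m)).congr_fun fun n => ?_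
  push_cast
  ring

lemma pseudoPoissonPMF_eq (l1 l2 l3 : ℝ) (x1 x2 : ℕ) :
    pseudoPoissonPMF l1 l2 l3 x1 x2 =
      poissonWeight l1 x1 * poissonWeight (l2 + l3 * x1) x2 := rfl

/-- The covariance of the two coordinates of the bivariate Pseudo-Poisson
distribution is `Cov(X1,X2) = λ1·λ3`. -/
theorem pseudoPoisson_cov (l1 l2 l3 : ℝ) (h1 : 0 < l1) (h2 : 0 ≤ l2) (h3 : 0 ≤ l3) :
    (∑' x1 : ℕ, ∑' x2 : ℕ, (x1 : ℝ) * (x2 : ℝ) * pseudoPoissonPMF l1 l2 l3 x1 x2)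
      - (∑' x1 : ℕ, ∑' x2 : ℕ, (x1 : ℝ) * pseudoPoissonPMF l1 l2 l3 x1 x2)
        * (∑' x1 : ℕ, ∑' x2 : ℕ, (x2 : ℝ) * pseudoPoissonPMF l1 l2 l3 x1 x2) =
      l1 * l3 := by
  have inner0 (x1 : ℕ) : ∑' x2 : ℕ, (x1 : ℝ) * pseudoPoissonPMF l1 l2 l3 x1 x2 =
      x1 * poissonWeight l1 x1 := by
    simp only [pseudoPoissonPMF_eq, ← mul_assoc]
    rw [tsum_mul_left, (hasSum_poissonWeight _).tsum_eq, mul_one]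
  have inner1 (x1 : ℕ) : ∑' x2 : ℕ, (x2 : ℝ) * pseudoPoissonPMF l1 l2 l3 x1 x2 =
      poissonWeight l1 x1 * (l2 + l3 * x1) := by
    simp only [pseudoPoissonPMF_eq, mul_left_comm _ (poissonWeight l1 x1)]
    rw [tsum_mul_left, (hasSum_poissonWeight_mean _).tsum_eq]
  have inner2 (x1 : ℕ) : ∑' x2 : ℕ, (x1 : ℝ) * (x2 : ℝ) * pseudoPoissonPMF l1 l2 l3 x1 x2 =
      x1 * (poissonWeight l1 x1 * (l2 + l3 * x1)) := by
    simp only [mul_assoc (x1 : ℝ)]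
    rw [tsum_mul_left, inner1]
  have meanX2 : HasSum (fun x1 : ℕ => poissonWeight l1 x1 * (l2 + l3 * x1))
      (l2 * 1 + l3 * l1) :=
    (((hasSum_poissonWeight l1).mul_left l2).add
      ((hasSum_poissonWeight_mean l1).mul_left l3)).congr_fun fun n => by ring
  have meanX1X2 : HasSum (fun x1 : ℕ => (x1 : ℝ) * (poissonWeight l1 x1 * (l2 + l3 * x1)))
      (l2 * l1 + l3 * (l1 * (l1 + 1))) :=
    (((hasSum_poissonWeight_mean l1).mul_left l2).add
      ((hasSum_poissonWeight_sq l1).mul_left l3)).congr_fun fun n => by ring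
  simp only [inner0, inner1, inner2]
  rw [meanX1X2.tsum_eq, meanX2.tsum_eq, (hasSum_poissonWeight_mean l1).tsum_eq]
  ring
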